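/- Let D′ ⋐ D ⊂ ℝ^{2n+1} be bounded open sets, let s > 2n + 4 be an integer, and let p ≥ 1. Then there exists a constant C > 0 such that for all smooth functions f₁,…,f_p : cl(D) → ℝ one has ‖f₁⋯f_p‖_{D′,s} ≤ C Σ_{j=1}^p ( ‖f_j‖_{D,s} · Π_{i ≠ j} ‖f_i‖_{D,s−1} ). -/

import Mathlib

open MeasureTheory Bornology

noncomputable section

variable {E : Type*} [NormedAddCommGroup E] [NormedSpace ℝ E]

/-- The standard contact form `η₀ = dx^{2n+1} - Σ x^{n+j} dx^j` on `ℝ^{2n+1}`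
(0-indexed coordinates): `η₀(x)(v) = v_{2n} - Σ_{j<n} x_{n+j} v_j`. -/
def eta0 (n : ℕ) (x v : Fin (2*n+1) → ℝ) : ℝ :=
  v ⟨2*n, by omega⟩ -
    ∑ j : Fin n, x ⟨n + j, by have := j.2; omega⟩ * v ⟨j, by have := j.2; omega⟩

/-- `dη₀ = Σ_{j<n} dx^j ∧ dx^{n+j}`. -/
def dEta0 (n : ℕ) (u v : Fin (2*n+1) → ℝ) : ℝ :=
  ∑ j : Fin n,
    (u ⟨j, by have := j.2; omega⟩ * v ⟨n + j, by have := j.2; omega⟩ -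
     u ⟨n + j, by have := j.2; omega⟩ * v ⟨j, by have := j.2; omega⟩)

/-- The horizontal vector fields: for `j < n`, `X_j = ∂_j + x_{n+j} ∂_{2n}`;
for `n ≤ j < 2n`, `X_j = ∂_j` (0-indexed). -/
def Xvec (n : ℕ) (j : Fin (2*n)) (x : Fin (2*n+1) → ℝ) : Fin (2*n+1) → ℝ :=
  if h : (j : ℕ) < n then
    (Pi.single (⟨j, by omega⟩ : Fin (2*n+1)) 1 : Fin (2*n+1) → ℝ)
      + x ⟨n + j, by omega⟩ • (Pi.single (⟨2*n, by omega⟩ : Fin (2*n+1)) 1 : Fin (2*n+1) → ℝ)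
  else
    (Pi.single (⟨j, by have := j.2; omega⟩ : Fin (2*n+1)) 1 : Fin (2*n+1) → ℝ)

/-- The horizontal derivative `X_j f`. -/
def hDeriv (n : ℕ) (j : Fin (2*n)) (f : (Fin (2*n+1) → ℝ) → E)
    (x : Fin (2*n+1) → ℝ) : E :=
  fderiv ℝ f x (Xvec n j x)

/-- Iterated horizontal derivative `X_I f = X_{i₁} ⋯ X_{i_t} f`. -/
def XI (n : ℕ) : List (Fin (2*n)) → ((Fin (2*n+1) → ℝ) → E) → ((Fin (2*n+1) → ℝ) → E)
  | [], f => f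
  | j :: I, f => hDeriv n j (XI n I f)

/-- Squared Folland–Stein norm `‖f‖_{D,s}² = Σ_{|I| ≤ s} ∫_D ‖X_I f‖²`. -/
def fsNormSq (n : ℕ) (D : Set (Fin (2*n+1) → ℝ)) (s : ℕ)
    (f : (Fin (2*n+1) → ℝ) → E) : ℝ :=
  ∑ t ∈ Finset.range (s+1), ∑ I : Fin t → Fin (2*n),
    ∫ x in D, ‖XI n (List.ofFn I) f x‖^2

/-- The Folland–Stein norm `‖f‖_{D,s}`. -/
def fsNorm (n : ℕ) (D : Set (Fin (2*n+1) → ℝ)) (s : ℕ)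
    (f : (Fin (2*n+1) → ℝ) → E) : ℝ :=
  Real.sqrt (fsNormSq n D s f)

/-- Ordinary partial derivative `∂_i f`. -/
def pDeriv (n : ℕ) (i : Fin (2*n+1)) (f : (Fin (2*n+1) → ℝ) → E)
    (x : Fin (2*n+1) → ℝ) : E :=
  fderiv ℝ f x (Pi.single i 1 : Fin (2*n+1) → ℝ)

/-- Iterated ordinary partial derivative. -/
def pI (n : ℕ) : List (Fin (2*n+1)) → ((Fin (2*n+1) → ℝ) → E) → ((Fin (2*n+1) → ℝ) → E)
  | [], f => f
  | i :: I, f => pDeriv n i (pI n I f)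

/-- The Reeb derivative `T₀ f = ∂_{2n} f` (0-indexed). -/
def T0Deriv (n : ℕ) (f : (Fin (2*n+1) → ℝ) → E) (x : Fin (2*n+1) → ℝ) : E :=
  fderiv ℝ f x (Pi.single (⟨2*n, by omega⟩ : Fin (2*n+1)) 1 : Fin (2*n+1) → ℝ)

/-- `X` is a contact vector field on `D`:  `dη₀(X, X_j) + X_j(η₀(X)) = 0` for all
horizontal `X_j`. -/
def IsContactVF (n : ℕ) (D : Set (Fin (2*n+1) → ℝ))
    (X : (Fin (2*n+1) → ℝ) → (Fin (2*n+1) → ℝ)) : Prop :=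
  ∀ j : Fin (2*n), ∀ x ∈ D,
    dEta0 n (X x) (Xvec n j x) + hDeriv n j (fun y => eta0 n y (X y)) x = 0

/-- The contact vector field with generating function `g`:
`X_g = g T₀ + Σ_j (-(X_{n+j} g) X_j + (X_j g) X_{n+j})`. -/
def genVF (n : ℕ) (g : (Fin (2*n+1) → ℝ) → ℝ) (x : Fin (2*n+1) → ℝ) :
    Fin (2*n+1) → ℝ :=
  g x • (Pi.single (⟨2*n, by omega⟩ : Fin (2*n+1)) 1 : Fin (2*n+1) → ℝ)
  + ∑ j : Fin n,
      (-(hDeriv n (⟨n + j, by have := j.2; omega⟩ : Fin (2*n)) g x) •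
          Xvec n (⟨j, by have := j.2; omega⟩ : Fin (2*n)) x
        + (hDeriv n (⟨j, by have := j.2; omega⟩ : Fin (2*n)) g x) •
          Xvec n (⟨n + j, by have := j.2; omega⟩ : Fin (2*n)) x)

/-!
A function on `ℝ^{2n+1}` can be estimated pointwise by integrals of its horizontal derivatives over
a chosen set of coordinates. Flowing along `X_j` trades an integral over the vertical line for one
over the plane of the `j`-th and the vertical coordinate, at the cost of one derivative, while
reaching the vertical line from a point costs two, since `T₀` is a commutator of horizontal fields.
So for each set `B` of horizontal coordinates, `|u|²` is at most its energy of order `|B| + 2`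
integrated over `B` and the vertical direction, and the integral of `|v|²` over these same
coordinates is at most the total energy of `v` of order `2n - |B|`. Multiplying and integrating
over the remaining coordinates gives `∫ |u|²|v|² ≤ C ‖u‖_k² ‖v‖_l²` whenever `k + l ≥ 2n + 2`.
With the Leibniz rule and induction on the number of factors this yields the product estimate for
compactly supported functions, and multiplication by a cutoff localises it.
-/

open Set Filter Function Topology
open scoped ENNReal NNReal ContDiff

/-- The coordinate space `ℝ^{2n+1}` of the `n`-th Heisenberg group. -/
abbrev Heis (n : ℕ) := Fin (2 * n + 1) → ℝ

section TestFunctions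

variable {V : Type*} [NormedAddCommGroup V] [NormedSpace ℝ V]

/-- Smooth vector-valued functions of compact support. A predicate, rather than a bundled type,
because the horizontal calculus below acts on unbundled functions. -/
structure IsTestFunction (u : V → E) : Prop where
  contDiff : ContDiff ℝ ∞ u
  hasCompactSupport : HasCompactSupport u

namespace IsTestFunction

variable {u v : V → E}

lemma differentiable (hu : IsTestFunction u) : Differentiable ℝ u :=
  hu.contDiff.differentiable (by simp)

lemma measurable_enorm_sq [MeasurableSpace V] [OpensMeasurableSpace V] (hu : IsTestFunction u) :
    Measurable fun x => ‖u x‖ₑ ^ 2 :=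
  hu.contDiff.continuous.enorm.measurable.pow_const 2

protected lemma mul {A : Type*} [NormedRing A] [NormedAlgebra ℝ A] {u v : V → A}
    (hu : IsTestFunction u) (hv : IsTestFunction v) : IsTestFunction (u * v) :=
  ⟨hu.contDiff.mul hv.contDiff, hu.hasCompactSupport.mul_right⟩

protected lemma prod {ι A : Type*} [NormedCommRing A] [NormedAlgebra ℝ A] {s : Finset ι}
    (hs : s.Nonempty) {u : ι → V → A} (hu : ∀ i ∈ s, IsTestFunction (u i)) :
    IsTestFunction (∏ i ∈ s, u i) :=
  Finset.prod_induction_nonempty u IsTestFunction (fun _ _ => IsTestFunction.mul) hs hu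

lemma smul_contDiffOn {χ : V → ℝ} {f : V → E} {D : Set V} (hD : IsOpen D)
    (hχ : IsTestFunction χ) (hχD : tsupport χ ⊆ D) (hf : ContDiffOn ℝ ∞ f D) :
    IsTestFunction (χ • f) where
  contDiff := contDiff_iff_contDiffAt.2 fun x => by
    by_cases hx : x ∈ tsupport χ
    · exact hχ.contDiff.contDiffAt.smul (hf.contDiffAt (hD.mem_nhds (hχD hx)))
    · have hzero : χ • f =ᶠ[𝓝 x] 0 :=
        (notMem_tsupport_iff_eventuallyEq.1 hx).mono fun y hy => by simp [hy]
      exact contDiffAt_const.congr_of_eventuallyEq hzero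
  hasCompactSupport := hχ.hasCompactSupport.smul_right

lemma exists_eq_one_nhdsSet [FiniteDimensional ℝ V] {K U : Set V} (hK : IsCompact K)
    (hU : IsOpen U) (hKU : K ⊆ U) :
    ∃ χ : V → ℝ, IsTestFunction χ ∧ tsupport χ ⊆ U ∧ ∀ᶠ x in 𝓝ˢ K, χ x = 1 := by
  obtain ⟨L, hL, hKL, hLU⟩ := exists_compact_between hK hU hKU
  obtain ⟨χ, hχ_one, hχ_zero, -⟩ := exists_contMDiffMap_one_nhds_of_subset_interior (n := (⊤ : ℕ∞))
    (modelWithCornersSelf ℝ V) hK.isClosed hKL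
  have hχL : tsupport χ ⊆ L :=
    closure_minimal (fun x hx => by_contra fun hxL => hx (hχ_zero x hxL)) hL.isClosed
  exact ⟨χ, ⟨χ.contMDiff.contDiff, .intro' hL hL.isClosed fun x hx => hχ_zero x hx⟩,
    hχL.trans hLU, hχ_one⟩

end IsTestFunction

end TestFunctions

section HorizontalDerivatives

variable {n : ℕ} {D : Set (Heis n)} {f g u v : Heis n → E}

lemma Xvec_eq_single_add_smul (j : Fin (2 * n)) (x : Heis n) :
    Xvec n j x = Pi.single j.castSucc 1 +
      Xvec n j x (Fin.last _) • (Pi.single (Fin.last _) 1 : Heis n) := by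
  have hlast : (⟨2 * n, by omega⟩ : Fin (2 * n + 1)) = Fin.last _ := rfl
  have hj : (⟨j, by omega⟩ : Fin (2 * n + 1)) = j.castSucc := rfl
  unfold Xvec
  split_ifs <;> simp [hlast, hj]

lemma Xvec_congr (j : Fin (2 * n)) {x y : Heis n}
    (h : ∀ i, i ≠ j.castSucc → i ≠ Fin.last _ → x i = y i) : Xvec n j x = Xvec n j y := by
  unfold Xvec
  split_ifs with hj
  · rw [h _ (by simp [Fin.ext_iff]; omega) (by simp [Fin.ext_iff]; omega)]
  · rfl

lemma contDiff_Xvec (j : Fin (2 * n)) : ContDiff ℝ ∞ (Xvec n j) := by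
  unfold Xvec
  split_ifs <;> fun_prop

lemma contDiffOn_hDeriv (hD : IsOpen D) (hf : ContDiffOn ℝ ∞ f D) (j : Fin (2 * n)) :
    ContDiffOn ℝ ∞ (hDeriv n j f) D :=
  (hf.fderiv_of_isOpen hD (by simp)).clm_apply (contDiff_Xvec j).contDiffOn

lemma contDiff_hDeriv (hu : ContDiff ℝ ∞ u) (j : Fin (2 * n)) : ContDiff ℝ ∞ (hDeriv n j u) :=
  contDiffOn_univ.1 (contDiffOn_hDeriv isOpen_univ hu.contDiffOn j)

lemma tsupport_hDeriv_subset (j : Fin (2 * n)) : tsupport (hDeriv n j u) ⊆ tsupport u := by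
  refine closure_minimal (fun x hx => support_fderiv_subset ℝ fun h => hx ?_) (isClosed_tsupport u)
  simp [hDeriv, h]

protected lemma IsTestFunction.hDeriv (hu : IsTestFunction u) (j : Fin (2 * n)) :
    IsTestFunction (hDeriv n j u) :=
  ⟨contDiff_hDeriv hu.contDiff j,
    hu.hasCompactSupport.mono' (subset_closure.trans (tsupport_hDeriv_subset j))⟩

lemma hDeriv_add (j : Fin (2 * n)) (hu : Differentiable ℝ u) (hv : Differentiable ℝ v) :
    hDeriv n j (u + v) = hDeriv n j u + hDeriv n j v := by
  ext x
  simp [hDeriv, fderiv_add (hu x) (hv x)]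

lemma hDeriv_mul {A : Type*} [NormedRing A] [NormedAlgebra ℝ A] {u v : Heis n → A}
    (j : Fin (2 * n)) (hu : Differentiable ℝ u) (hv : Differentiable ℝ v) :
    hDeriv n j (u * v) = hDeriv n j u * v + u * hDeriv n j v := by
  ext x
  simp [hDeriv, fderiv_mul' (hu x) (hv x), add_comm]

lemma hDeriv_smul_of_tsupport_subset (hD : IsOpen D) {χ : Heis n → ℝ} (hχ : IsTestFunction χ)
    (hχD : tsupport χ ⊆ D) (hf : ContDiffOn ℝ ∞ f D) (j : Fin (2 * n)) :
    hDeriv n j (χ • f) = hDeriv n j χ • f + χ • hDeriv n j f := by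
  ext x
  by_cases hx : x ∈ tsupport χ
  · have hfx := (hf.contDiffAt (hD.mem_nhds (hχD hx))).differentiableAt (by simp)
    simp [hDeriv, fderiv_smul (hχ.differentiable x) hfx, add_comm]
  · have hχx : χ =ᶠ[𝓝 x] 0 := notMem_tsupport_iff_eventuallyEq.1 hx
    have hχfx : χ • f =ᶠ[𝓝 x] 0 := by filter_upwards [hχx] with y hy; simp [hy]
    simp [hDeriv, hχx.fderiv_eq, hχfx.fderiv_eq, hχx.eq_of_nhds]

lemma XI_append_singleton (I : List (Fin (2 * n))) (j : Fin (2 * n)) (f : Heis n → E) :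
    XI n (I ++ [j]) f = XI n I (hDeriv n j f) := by
  induction I with
  | nil => rfl
  | cons i I ih => simp only [List.cons_append, XI, ih]

lemma contDiffOn_XI (hD : IsOpen D) (hf : ContDiffOn ℝ ∞ f D) (I : List (Fin (2 * n))) :
    ContDiffOn ℝ ∞ (XI n I f) D := by
  induction I with
  | nil => exact hf
  | cons j I ih => exact contDiffOn_hDeriv hD ih j

protected lemma IsTestFunction.XI (hu : IsTestFunction u) (I : List (Fin (2 * n))) :
    IsTestFunction (XI n I u) := by
  induction I with
  | nil => exact hu
  | cons j I ih => exact ih.hDeriv j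

lemma eqOn_XI (hD : IsOpen D) (h : EqOn f g D) (I : List (Fin (2 * n))) :
    EqOn (XI n I f) (XI n I g) D := by
  induction I with
  | nil => exact h
  | cons j I ih =>
    intro x hx
    simp only [XI, hDeriv, (ih.eventuallyEq_of_mem (hD.mem_nhds hx)).fderiv_eq]

end HorizontalDerivatives

section Energy

variable {n : ℕ} {D D' : Set (Heis n)} {u v : Heis n → E}

/-- The density `∑_{|I| ≤ k} ‖X_I u‖²` of the Folland–Stein norm, with values in `ℝ≥0∞` so that
it can be integrated without integrability hypotheses. -/
def hEnergy (k : ℕ) (u : Heis n → E) (x : Heis n) : ℝ≥0∞ :=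
  ∑ t ∈ Finset.range (k + 1), ∑ I : Fin t → Fin (2 * n), ‖XI n (List.ofFn I) u x‖ₑ ^ 2

/-- The squared Folland–Stein norm of order `k` over `D`, as an extended nonnegative number. -/
def fsEnergy (D : Set (Heis n)) (k : ℕ) (u : Heis n → E) : ℝ≥0∞ :=
  ∫⁻ x in D, hEnergy k u x

/-- Finiteness of the Folland–Stein norm of order `k` over `D`: every horizontal derivative of
order at most `k` is square integrable. Without it `fsNorm` takes a junk value. -/
def FSIntegrable (D : Set (Heis n)) (k : ℕ) (f : Heis n → E) : Prop :=
  ∀ I : List (Fin (2 * n)), I.length ≤ k → IntegrableOn (fun x => ‖XI n I f x‖ ^ 2) D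

lemma enorm_add_sq_le {F : Type*} [SeminormedAddCommGroup F] (a b : F) :
    ‖a + b‖ₑ ^ 2 ≤ 2 * (‖a‖ₑ ^ 2 + ‖b‖ₑ ^ 2) := by
  have h : ‖a + b‖₊ ^ 2 ≤ 2 * (‖a‖₊ ^ 2 + ‖b‖₊ ^ 2) :=
    (pow_le_pow_left₀ zero_le (nnnorm_add_le a b) 2).trans add_sq_le
  simp only [enorm_eq_nnnorm]
  exact_mod_cast h

lemma enorm_mul_sq_le {A : Type*} [NonUnitalSeminormedRing A] (a b : A) :
    ‖a * b‖ₑ ^ 2 ≤ ‖a‖ₑ ^ 2 * ‖b‖ₑ ^ 2 := by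
  have h : ‖a * b‖₊ ^ 2 ≤ (‖a‖₊ * ‖b‖₊) ^ 2 := by gcongr; exact nnnorm_mul_le a b
  rw [mul_pow] at h
  simp only [enorm_eq_nnnorm]
  exact_mod_cast h

lemma hEnergy_zero (u : Heis n → E) : hEnergy 0 u = fun x => ‖u x‖ₑ ^ 2 := by
  ext x
  simp [hEnergy, XI]

lemma hEnergy_succ (k : ℕ) (u : Heis n → E) (x : Heis n) :
    hEnergy (k + 1) u x = ‖u x‖ₑ ^ 2 + ∑ j, hEnergy k (hDeriv n j u) x := by
  have key (t : ℕ) : ∑ I : Fin (t + 1) → Fin (2 * n), ‖XI n (List.ofFn I) u x‖ₑ ^ 2 =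
      ∑ j, ∑ I : Fin t → Fin (2 * n), ‖XI n (List.ofFn I) (hDeriv n j u) x‖ₑ ^ 2 := by
    rw [← (Fin.snocEquiv fun _ => Fin (2 * n)).sum_comp, Fintype.sum_prod_type]
    refine Finset.sum_congr rfl fun j _ => Finset.sum_congr rfl fun I _ => ?_
    rw [← XI_append_singleton, List.ofFn_succ', List.concat_eq_append]
    simp [Fin.snocEquiv]
  simp only [hEnergy]
  rw [Finset.sum_range_succ', add_comm, Finset.sum_comm]
  simp only [key]
  simp [XI]

lemma hEnergy_mono {k l : ℕ} (h : k ≤ l) (u : Heis n → E) (x : Heis n) :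
    hEnergy k u x ≤ hEnergy l u x :=
  Finset.sum_le_sum_of_subset (Finset.range_subset_range.2 (by omega))

lemma enorm_sq_le_hEnergy (k : ℕ) (u : Heis n → E) (x : Heis n) :
    ‖u x‖ₑ ^ 2 ≤ hEnergy k u x :=
  (congrFun (hEnergy_zero u) x).symm.le.trans (hEnergy_mono zero_le u x)

lemma hEnergy_hDeriv_le (k : ℕ) (j : Fin (2 * n)) (u : Heis n → E) (x : Heis n) :
    hEnergy k (hDeriv n j u) x ≤ hEnergy (k + 1) u x := by
  rw [hEnergy_succ]
  exact (Finset.single_le_sum (f := fun j => hEnergy k (hDeriv n j u) x) (fun _ _ => zero_le)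
    (Finset.mem_univ j)).trans le_add_self

lemma IsTestFunction.measurable_hEnergy (hu : IsTestFunction u) (k : ℕ) :
    Measurable (hEnergy k u) :=
  Finset.measurable_fun_sum _ fun _ _ => Finset.measurable_fun_sum _ fun _ _ =>
    (hu.XI _).measurable_enorm_sq

lemma hEnergy_congr {f g : Heis n → E} (hD : IsOpen D) (h : EqOn f g D) (k : ℕ) :
    EqOn (hEnergy k f) (hEnergy k g) D := fun x hx =>
  Finset.sum_congr rfl fun _ _ => Finset.sum_congr rfl fun _ _ => by rw [eqOn_XI hD h _ hx]

lemma hEnergy_eq_zero_of_notMem_tsupport {x : Heis n} (hx : x ∉ tsupport u) (k : ℕ) :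
    hEnergy k u x = 0 := by
  have hzero : EqOn u 0 (tsupport u)ᶜ := fun y hy => image_eq_zero_of_notMem_tsupport hy
  rw [hEnergy_congr (isClosed_tsupport u).isOpen_compl hzero k hx]
  have hXI (I : List (Fin (2 * n))) : XI n I (0 : Heis n → E) = 0 := by
    induction I with
    | nil => rfl
    | cons j I ih => ext x; simp [XI, ih, hDeriv]
  simp [hEnergy, hXI]

lemma IsTestFunction.hEnergy_add_le (hu : IsTestFunction u) (hv : IsTestFunction v) (k : ℕ)
    (x : Heis n) : hEnergy k (u + v) x ≤ 2 * (hEnergy k u x + hEnergy k v x) := by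
  induction k generalizing u v with
  | zero => simpa only [hEnergy_zero, Pi.add_apply] using enorm_add_sq_le (u x) (v x)
  | succ k ih =>
    simp only [hEnergy_succ, Pi.add_apply, hDeriv_add _ hu.differentiable hv.differentiable]
    calc ‖u x + v x‖ₑ ^ 2 + ∑ j, hEnergy k (hDeriv n j u + hDeriv n j v) x
      _ ≤ 2 * (‖u x‖ₑ ^ 2 + ‖v x‖ₑ ^ 2) + ∑ j, 2 *
            (hEnergy k (hDeriv n j u) x + hEnergy k (hDeriv n j v) x) := by
          gcongr with j
          · exact enorm_add_sq_le _ _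
          · exact ih (hu.hDeriv j) (hv.hDeriv j)
      _ = _ := by rw [← Finset.mul_sum, Finset.sum_add_distrib]; ring

lemma fsEnergy_mono {k l : ℕ} (h : k ≤ l) (D : Set (Heis n)) (u : Heis n → E) :
    fsEnergy D k u ≤ fsEnergy D l u :=
  lintegral_mono fun x => hEnergy_mono h u x

lemma fsEnergy_mono_set (h : D' ⊆ D) (k : ℕ) (u : Heis n → E) :
    fsEnergy D' k u ≤ fsEnergy D k u :=
  lintegral_mono_set h

lemma fsEnergy_hDeriv_le (D : Set (Heis n)) (k : ℕ) (j : Fin (2 * n)) (u : Heis n → E) :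
    fsEnergy D k (hDeriv n j u) ≤ fsEnergy D (k + 1) u :=
  lintegral_mono fun x => hEnergy_hDeriv_le k j u x

lemma fsEnergy_univ_zero (u : Heis n → E) : fsEnergy univ 0 u = ∫⁻ x, ‖u x‖ₑ ^ 2 := by
  rw [fsEnergy, Measure.restrict_univ, hEnergy_zero]

namespace IsTestFunction

lemma fsEnergy_univ_succ (hu : IsTestFunction u) (k : ℕ) :
    fsEnergy univ (k + 1) u =
      (∫⁻ x, ‖u x‖ₑ ^ 2) + ∑ j, fsEnergy univ k (hDeriv n j u) := by
  simp only [fsEnergy, Measure.restrict_univ, hEnergy_succ]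
  rw [lintegral_add_left hu.measurable_enorm_sq,
    lintegral_finsetSum _ fun j _ => (hu.hDeriv j).measurable_hEnergy k]

lemma fsEnergy_add_le (hu : IsTestFunction u) (hv : IsTestFunction v) (D : Set (Heis n)) (k : ℕ) :
    fsEnergy D k (u + v) ≤ 2 * (fsEnergy D k u + fsEnergy D k v) :=
  calc fsEnergy D k (u + v) ≤ ∫⁻ x in D, 2 * (hEnergy k u x + hEnergy k v x) :=
        lintegral_mono fun x => hu.hEnergy_add_le hv k x
    _ = _ := by
        rw [lintegral_const_mul' _ _ (by simp), lintegral_add_left (hu.measurable_hEnergy k)]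
        rfl

end IsTestFunction

end Energy

section LineEstimates

lemma enorm_sq_le_lintegral_enorm_deriv_sq_real {φ : ℝ → ℝ} (hφ : ContDiff ℝ 1 φ)
    (hc : HasCompactSupport φ) (t : ℝ) :
    ‖φ t‖ₑ ^ 2 ≤ ∫⁻ a, (‖φ a‖ₑ ^ 2 + ‖deriv φ a‖ₑ ^ 2) := by
  have hd (a : ℝ) : deriv (φ * φ) a = 2 * φ a * deriv φ a := by
    have h := hφ.differentiable one_ne_zero a
    rw [deriv_mul h h]
    ring
  calc ‖φ t‖ₑ ^ 2 = ‖(φ * φ) t‖ₑ := by rw [Pi.mul_apply, enorm_mul, sq]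
    _ ≤ ∫⁻ a in Iic t, ‖deriv (φ * φ) a‖ₑ :=
        HasCompactSupport.enorm_le_lintegral_Ici_deriv (hφ.mul hφ) hc.mul_right t
    _ ≤ ∫⁻ a, ‖deriv (φ * φ) a‖ₑ := setLIntegral_le_lintegral _ _
    _ ≤ ∫⁻ a, (‖φ a‖ₑ ^ 2 + ‖deriv φ a‖ₑ ^ 2) := by
        refine lintegral_mono fun a => ?_
        have h := two_mul_le_add_sq ‖φ a‖₊ ‖deriv φ a‖₊
        rw [hd, enorm_mul, enorm_mul]
        simp only [enorm_eq_nnnorm, Real.nnnorm_ofNat]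
        exact_mod_cast h

lemma enorm_sq_le_lintegral_enorm_deriv_sq {φ : ℝ → E} (hφ : ContDiff ℝ 1 φ)
    (hc : HasCompactSupport φ) (t : ℝ) :
    ‖φ t‖ₑ ^ 2 ≤ ∫⁻ a, (‖φ a‖ₑ ^ 2 + ‖deriv φ a‖ₑ ^ 2) := by
  obtain ⟨g, hg, hgt⟩ := exists_dual_vector'' ℝ (φ t)
  have hg_le (y : E) : ‖g y‖ₑ ≤ ‖y‖ₑ := by
    simpa [enorm_le_iff_norm_le] using g.le_of_opNorm_le hg y
  have hderiv (a : ℝ) : deriv (g ∘ φ) a = g (deriv φ a) :=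
    (g.hasFDerivAt.comp_hasDerivAt a (hφ.differentiable one_ne_zero a).hasDerivAt).deriv
  calc ‖φ t‖ₑ ^ 2 = ‖(g ∘ φ) t‖ₑ ^ 2 := by simp [hgt]
    _ ≤ ∫⁻ a, (‖(g ∘ φ) a‖ₑ ^ 2 + ‖deriv (g ∘ φ) a‖ₑ ^ 2) :=
        enorm_sq_le_lintegral_enorm_deriv_sq_real (g.contDiff.comp hφ)
          (hc.comp_left (map_zero g)) t
    _ ≤ ∫⁻ a, (‖φ a‖ₑ ^ 2 + ‖deriv φ a‖ₑ ^ 2) := by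
        gcongr with a
        · exact hg_le (φ a)
        · rw [hderiv]
          exact hg_le _

lemma IsTestFunction.enorm_sq_le_lintegral_line {V : Type*} [NormedAddCommGroup V]
    [NormedSpace ℝ V] {u : V → E} (hu : IsTestFunction u) (y : V) {v : V} (hv : v ≠ 0) :
    ‖u y‖ₑ ^ 2 ≤ ∫⁻ a : ℝ, (‖u (y + a • v)‖ₑ ^ 2 + ‖fderiv ℝ u (y + a • v) v‖ₑ ^ 2) := by
  have hline : IsClosedEmbedding fun a : ℝ => y + a • v :=
    (Homeomorph.addLeft y).isClosedEmbedding.comp (isClosedEmbedding_smul_left hv)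
  have hderiv (a : ℝ) : deriv (fun a : ℝ => u (y + a • v)) a = fderiv ℝ u (y + a • v) v := by
    have h : HasDerivAt (fun a : ℝ => y + a • v) v a := by
      simpa using ((hasDerivAt_id a).smul_const v).const_add y
    exact ((hu.differentiable _).hasFDerivAt.comp_hasDerivAt a h).deriv
  have hu1 : ContDiff ℝ 1 u := hu.contDiff.of_le (by simp)
  have h := enorm_sq_le_lintegral_enorm_deriv_sq (φ := fun a : ℝ => u (y + a • v)) (by fun_prop)
    (hu.hasCompactSupport.comp_isClosedEmbedding hline) 0
  simpa only [hderiv, zero_smul, add_zero] using h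

end LineEstimates

section MixedMarginals

variable {ι : Type*} [Fintype ι] [DecidableEq ι] {X : ι → Type*} [∀ i, MeasurableSpace (X i)]
  {μ : ∀ i, Measure (X i)} [∀ i, SigmaFinite (μ i)]

lemma lmarginal_compl_lmarginal {F : (∀ i, X i) → ℝ≥0∞} (hF : Measurable F) (S : Finset ι)
    (x : ∀ i, X i) : (∫⋯∫⁻_Sᶜ, ∫⋯∫⁻_S, F ∂μ ∂μ) x = ∫⁻ y, F y ∂Measure.pi μ := by
  rw [← lmarginal_union μ F hF disjoint_compl_left, Finset.union_comm, Finset.union_compl,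
    lmarginal_univ]

lemma lintegral_mul_le_of_le_lmarginal {f g F : (∀ i, X i) → ℝ≥0∞} {S : Finset ι} {M : ℝ≥0∞}
    (hg : Measurable g) (hF : Measurable F) (hfF : f ≤ ∫⋯∫⁻_S, F ∂μ)
    (hgM : ∀ x, (∫⋯∫⁻_S, g ∂μ) x ≤ M) :
    ∫⁻ x, f x * g x ∂Measure.pi μ ≤ M * ∫⁻ x, F x ∂Measure.pi μ := by
  obtain h | ⟨⟨x₀⟩⟩ := isEmpty_or_nonempty (∀ i, X i)
  · simp [lintegral_of_isEmpty]
  set G := ∫⋯∫⁻_S, F ∂μ with hG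
  have hGm : Measurable G := hF.lmarginal μ
  have hG_mul (x : ∀ i, X i) : (∫⋯∫⁻_S, G * g ∂μ) x = G x * (∫⋯∫⁻_S, g ∂μ) x := by
    have hconst (y : ∀ i : S, X i) : G (updateFinset x S y) = G x :=
      lmarginal_congr μ F fun i hi => by simp [updateFinset, hi]
    simp only [lmarginal, Pi.mul_apply, hconst]
    exact lintegral_const_mul _ (hg.comp measurable_updateFinset)
  calc ∫⁻ x, f x * g x ∂Measure.pi μ
      ≤ ∫⁻ x, (G * g) x ∂Measure.pi μ := lintegral_mono fun x => mul_le_mul_left (hfF x) _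
    _ = (∫⋯∫⁻_Sᶜ, ∫⋯∫⁻_S, G * g ∂μ ∂μ) x₀ := (lmarginal_compl_lmarginal (hGm.mul hg) S x₀).symm
    _ ≤ (∫⋯∫⁻_Sᶜ, fun x => M * G x ∂μ) x₀ := by
        refine lmarginal_mono (fun x => ?_) x₀
        rw [hG_mul, mul_comm]
        gcongr
        exact hgM x
    _ = M * (∫⋯∫⁻_Sᶜ, G ∂μ) x₀ := lintegral_const_mul _ (hGm.comp measurable_updateFinset)
    _ = M * ∫⁻ x, F x ∂Measure.pi μ := by rw [hG, lmarginal_compl_lmarginal hF]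

end MixedMarginals

section MarginalEstimates

variable {n : ℕ} {u : Heis n → E}

/-- The coordinates indexed by `B`, together with the vertical coordinate `x^{2n+1}`. -/
def withVertical (B : Finset (Fin (2 * n))) : Finset (Fin (2 * n + 1)) :=
  insert (Fin.last _) (B.map Fin.castSuccEmb)

lemma last_notMem_map_castSucc (B : Finset (Fin (2 * n))) :
    Fin.last _ ∉ B.map Fin.castSuccEmb := by
  simp [Fin.castSucc_ne_last]

lemma compl_withVertical (B : Finset (Fin (2 * n))) :
    (withVertical B)ᶜ = Bᶜ.map Fin.castSuccEmb := by
  ext i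
  cases i using Fin.lastCases <;> simp [withVertical]

lemma update_last_add_smul_Xvec (j : Fin (2 * n)) (x : Heis n) (t a : ℝ) :
    update x (Fin.last _) t + a • Xvec n j x =
      update (update x j.castSucc (x j.castSucc + a)) (Fin.last _)
        (t + a * Xvec n j x (Fin.last _)) := by
  have hX := Xvec_eq_single_add_smul j x
  generalize Xvec n j x (Fin.last _) = c at hX ⊢
  rw [hX]
  ext i
  cases i using Fin.lastCases with
  | last => simp
  | cast i => by_cases hi : i = j <;> simp [hi, Fin.castSucc_ne_last]

lemma Xvec_update_last_add_smul_Xvec (j : Fin (2 * n)) (x : Heis n) (t a : ℝ) :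
    Xvec n j (update x (Fin.last _) t + a • Xvec n j x) = Xvec n j x :=
  Xvec_congr j fun i hij hi => by
    rw [update_last_add_smul_Xvec]
    simp [hij, hi]

/-- Integrating along the flow lines of `X_j` through a vertical line sweeps out the plane of the
`j`-th and the vertical coordinate by a shear, which preserves the measure. -/
lemma IsTestFunction.lintegral_vertical_le (hu : IsTestFunction u) (j : Fin (2 * n))
    (x : Heis n) :
    ∫⁻ t : ℝ, ‖u (update x (Fin.last _) t)‖ₑ ^ 2 ≤
      ∫⁻ τ : ℝ, ∫⁻ t : ℝ, (‖u (update (update x j.castSucc τ) (Fin.last _) t)‖ₑ ^ 2 +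
        ‖hDeriv n j u (update (update x j.castSucc τ) (Fin.last _) t)‖ₑ ^ 2) := by
  set h : Heis n → ℝ≥0∞ := fun z => ‖u z‖ₑ ^ 2 + ‖hDeriv n j u z‖ₑ ^ 2 with hh
  have hm : Measurable h := hu.measurable_enorm_sq.add (hu.hDeriv j).measurable_enorm_sq
  set X := Xvec n j x with hX
  have hX0 : X ≠ 0 := fun h0 => by
    have := congrFun ((Xvec_eq_single_add_smul j x).symm.trans h0) j.castSucc
    simp [Fin.castSucc_ne_last] at this
  calc ∫⁻ t : ℝ, ‖u (update x (Fin.last _) t)‖ₑ ^ 2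
      ≤ ∫⁻ t : ℝ, ∫⁻ a : ℝ, h (update x (Fin.last _) t + a • X) := by
        refine lintegral_mono fun t => (hu.enorm_sq_le_lintegral_line _ hX0).trans_eq ?_
        simp only [hh, _root_.hDeriv, hX, Xvec_update_last_add_smul_Xvec]
    _ = ∫⁻ a : ℝ, ∫⁻ t : ℝ, h (update x (Fin.last _) t + a • X) := by
        have hcont : Continuous fun p : ℝ × ℝ => update x (Fin.last _) p.1 + p.2 • X := by fun_prop
        exact lintegral_lintegral_swap (hm.comp hcont.measurable).aemeasurable
    _ = ∫⁻ a : ℝ, ∫⁻ t : ℝ,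
          h (update (update x j.castSucc (x j.castSucc + a)) (Fin.last _) t) := by
        refine lintegral_congr fun a => ?_
        simp only [hX, update_last_add_smul_Xvec]
        exact lintegral_add_right_eq_self
          (fun t => h (update (update x j.castSucc (x j.castSucc + a)) (Fin.last _) t)) _
    _ = ∫⁻ τ : ℝ, ∫⁻ t : ℝ, h (update (update x j.castSucc τ) (Fin.last _) t) :=
        lintegral_add_left_eq_self
          (fun τ => ∫⁻ t : ℝ, h (update (update x j.castSucc τ) (Fin.last _) t)) _

lemma IsTestFunction.lintegral_vertical_le_lmarginal (hu : IsTestFunction u)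
    (B : Finset (Fin (2 * n))) (x : Heis n) :
    ∫⁻ t : ℝ, ‖u (update x (Fin.last _) t)‖ₑ ^ 2 ≤
      2 ^ B.card * (∫⋯∫⁻_withVertical B, hEnergy B.card u ∂fun _ => volume) x := by
  induction B using Finset.induction_on generalizing u x with
  | empty => simp [withVertical, lmarginal_singleton, hEnergy_zero]
  | insert j B hj ih =>
    have hset : withVertical (insert j B) = insert j.castSucc (withVertical B) := by
      simp [withVertical, Finset.map_insert, Finset.insert_comm]
    have hnot : j.castSucc ∉ withVertical B := by simp [withVertical, hj, Fin.castSucc_ne_last]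
    have hslice (τ : ℝ) : Measurable fun t : ℝ =>
        ‖u (update (update x j.castSucc τ) (Fin.last _) t)‖ₑ ^ 2 :=
      hu.measurable_enorm_sq.comp (measurable_update _)
    rw [hset, lmarginal_insert _ (hu.measurable_hEnergy _) hnot,
      Finset.card_insert_of_notMem hj, ← lintegral_const_mul' _ _ (by simp)]
    refine (hu.lintegral_vertical_le j x).trans (lintegral_mono fun τ => ?_)
    rw [lintegral_add_left (hslice τ), pow_succ, mul_assoc, two_mul (lmarginal _ _ _ _), mul_add]
    gcongr
    · exact (ih hu _).trans <| mul_le_mul_right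
        (lmarginal_mono (fun z => hEnergy_mono B.card.le_succ u z) _) _
    · exact (ih (hu.hDeriv j) _).trans <| mul_le_mul_right
        (lmarginal_mono (fun z => hEnergy_hDeriv_le _ j u z) _) _

lemma fderiv_hDeriv (hu : ContDiff ℝ 2 u) (j : Fin (2 * n)) (x v : Heis n) :
    fderiv ℝ (hDeriv n j u) x v =
      fderiv ℝ (fderiv ℝ u) x v (Xvec n j x) + fderiv ℝ u x (fderiv ℝ (Xvec n j) x v) := by
  have hfderiv : ContDiff ℝ 1 (fderiv ℝ u) := hu.fderiv_right (by norm_num)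
  change fderiv ℝ (fun y => fderiv ℝ u y (Xvec n j y)) x v = _
  rw [fderiv_clm_apply (hfderiv.differentiable one_ne_zero x)
    ((contDiff_Xvec j).differentiable (by simp) x)]
  simp [add_comm]

lemma T0Deriv_eq_hDeriv_commutator (hu : ContDiff ℝ 2 u) (i : Fin n) (x : Heis n) :
    T0Deriv n u x =
      hDeriv n ⟨n + i, by omega⟩ (hDeriv n ⟨i, by omega⟩ u) x -
        hDeriv n ⟨i, by omega⟩ (hDeriv n ⟨n + i, by omega⟩ u) x := by
  have hsymm : IsSymmSndFDerivAt ℝ u x := hu.contDiffAt.isSymmSndFDerivAt (by simp)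
  have hXi : Xvec n ⟨i, by omega⟩ = fun y => Pi.single ⟨i, by omega⟩ 1 +
      y ⟨n + i, by omega⟩ • (Pi.single ⟨2 * n, by omega⟩ 1 : Heis n) := by
    ext1 y
    simp [Xvec]
  have hXni : Xvec n ⟨n + i, by omega⟩ = fun _ => Pi.single ⟨n + i, by omega⟩ 1 := by
    ext1 y
    simp [Xvec]
  have hXi_deriv (v : Heis n) : fderiv ℝ (Xvec n ⟨i, by omega⟩) x v =
      v ⟨n + i, by omega⟩ • Pi.single ⟨2 * n, by omega⟩ 1 := by
    have hcoord : HasFDerivAt (fun y : Heis n => y ⟨n + i, by omega⟩)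
        (ContinuousLinearMap.proj (R := ℝ) (φ := fun _ => ℝ) ⟨n + i, by omega⟩) x :=
      hasFDerivAt_apply _ x
    rw [hXi, ((hcoord.smul_const _).const_add _).fderiv]
    simp
  rw [hDeriv, fderiv_hDeriv hu, hDeriv, fderiv_hDeriv hu, hsymm.eq, hXi_deriv, hXni]
  simp [T0Deriv]

lemma IsTestFunction.enorm_sq_le_lintegral_T0Deriv (hu : IsTestFunction u) (x : Heis n) :
    ‖u x‖ₑ ^ 2 ≤ ∫⁻ t : ℝ, (‖u (update x (Fin.last _) t)‖ₑ ^ 2 +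
      ‖T0Deriv n u (update x (Fin.last _) t)‖ₑ ^ 2) := by
  have hline (a : ℝ) : x + a • Pi.single (Fin.last _) 1 =
      update x (Fin.last _) (x (Fin.last _) + a) := by
    ext i
    cases i using Fin.lastCases <;> simp [Fin.castSucc_ne_last]
  have h := hu.enorm_sq_le_lintegral_line x (v := Pi.single (Fin.last _) 1) (by simp)
  simp only [hline] at h
  exact h.trans_eq (lintegral_add_left_eq_self (fun t : ℝ => ‖u (update x (Fin.last _) t)‖ₑ ^ 2 +
    ‖T0Deriv n u (update x (Fin.last _) t)‖ₑ ^ 2) _)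

/-- The vertical derivative is a commutator of two horizontal ones, so controlling `u` pointwise
from its vertical line costs two horizontal derivatives. -/
lemma IsTestFunction.enorm_sq_le_lmarginal (hn : 1 ≤ n) (hu : IsTestFunction u)
    (B : Finset (Fin (2 * n))) (x : Heis n) :
    ‖u x‖ₑ ^ 2 ≤ 5 * 2 ^ B.card *
      (∫⋯∫⁻_withVertical B, hEnergy (B.card + 2) u ∂fun _ => volume) x := by
  set w := hDeriv n ⟨n + 0, by omega⟩ (hDeriv n ⟨0, by omega⟩ u)
  set w' := hDeriv n ⟨0, by omega⟩ (hDeriv n ⟨n + 0, by omega⟩ u)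
  have hw_test : IsTestFunction w := (hu.hDeriv _).hDeriv _
  have hw'_test : IsTestFunction w' := (hu.hDeriv _).hDeriv _
  have hT (z : Heis n) : ‖T0Deriv n u z‖ₑ ^ 2 ≤ 2 * (‖w z‖ₑ ^ 2 + ‖w' z‖ₑ ^ 2) := by
    rw [T0Deriv_eq_hDeriv_commutator (contDiff_infty.1 hu.contDiff 2) ⟨0, hn⟩, sub_eq_add_neg]
    exact (enorm_add_sq_le _ _).trans_eq (by rw [enorm_neg])
  have hslice {f : Heis n → E} (hf : IsTestFunction f) :
      Measurable fun t : ℝ => ‖f (update x (Fin.last _) t)‖ₑ ^ 2 :=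
    hf.measurable_enorm_sq.comp (measurable_update _)
  set M := (∫⋯∫⁻_withVertical B, hEnergy (B.card + 2) u ∂fun _ => volume) x
  have hvert {f : Heis n → E} (hf : IsTestFunction f)
      (hfu : hEnergy B.card f ≤ hEnergy (B.card + 2) u) :
      ∫⁻ t : ℝ, ‖f (update x (Fin.last _) t)‖ₑ ^ 2 ≤ 2 ^ B.card * M :=
    (hf.lintegral_vertical_le_lmarginal B x).trans <| mul_le_mul_right (lmarginal_mono hfu x) _
  have hiter (i j : Fin (2 * n)) : hEnergy B.card (hDeriv n i (hDeriv n j u)) ≤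
      hEnergy (B.card + 2) u := fun z =>
    (hEnergy_hDeriv_le _ i _ z).trans (hEnergy_hDeriv_le _ j u z)
  calc ‖u x‖ₑ ^ 2
      ≤ ∫⁻ t : ℝ, (‖u (update x (Fin.last _) t)‖ₑ ^ 2 +
          2 * (‖w (update x (Fin.last _) t)‖ₑ ^ 2 + ‖w' (update x (Fin.last _) t)‖ₑ ^ 2)) :=
        (hu.enorm_sq_le_lintegral_T0Deriv x).trans <| lintegral_mono fun t => by gcongr; exact hT _
    _ = (∫⁻ t : ℝ, ‖u (update x (Fin.last _) t)‖ₑ ^ 2) +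
          2 * ((∫⁻ t : ℝ, ‖w (update x (Fin.last _) t)‖ₑ ^ 2) +
            ∫⁻ t : ℝ, ‖w' (update x (Fin.last _) t)‖ₑ ^ 2) := by
        rw [lintegral_add_left (hslice hu), lintegral_const_mul' _ _ (by simp),
          lintegral_add_left (hslice hw_test)]
    _ ≤ 2 ^ B.card * M + 2 * (2 ^ B.card * M + 2 ^ B.card * M) := by
        gcongr
        exacts [hvert hu (fun z => hEnergy_mono (by omega) u z), hvert hw_test (hiter _ _),
          hvert hw'_test (hiter _ _)]
    _ = 5 * 2 ^ B.card * M := by ring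

lemma IsTestFunction.lmarginal_enorm_sq_le_fsEnergy (hu : IsTestFunction u)
    (B : Finset (Fin (2 * n))) (x : Heis n) :
    (∫⋯∫⁻_withVertical B, (fun z => ‖u z‖ₑ ^ 2) ∂fun _ => volume) x ≤
      2 ^ Bᶜ.card * fsEnergy univ Bᶜ.card u := by
  have hm := hu.measurable_hEnergy Bᶜ.card
  have hcompl : (withVertical Bᶜ)ᶜ = B.map Fin.castSuccEmb := by
    rw [compl_withVertical, compl_compl]
  calc (∫⋯∫⁻_withVertical B, (fun z => ‖u z‖ₑ ^ 2) ∂fun _ => volume) x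
      = (∫⋯∫⁻_B.map Fin.castSuccEmb,
          (fun z => ∫⁻ t : ℝ, ‖u (update z (Fin.last _) t)‖ₑ ^ 2) ∂fun _ => volume) x := by
        rw [withVertical, lmarginal_insert' _ hu.measurable_enorm_sq (last_notMem_map_castSucc B)]
    _ ≤ (∫⋯∫⁻_B.map Fin.castSuccEmb, (fun z => 2 ^ Bᶜ.card *
          (∫⋯∫⁻_withVertical Bᶜ, hEnergy Bᶜ.card u ∂fun _ => volume) z) ∂fun _ => volume) x :=
        lmarginal_mono (fun z => hu.lintegral_vertical_le_lmarginal Bᶜ z) x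
    _ = 2 ^ Bᶜ.card * (∫⋯∫⁻_B.map Fin.castSuccEmb,
          ∫⋯∫⁻_withVertical Bᶜ, hEnergy Bᶜ.card u ∂fun _ => volume ∂fun _ => volume) x :=
        lintegral_const_mul' _ _ (by simp)
    _ = 2 ^ Bᶜ.card * fsEnergy univ Bᶜ.card u := by
        rw [← hcompl, lmarginal_compl_lmarginal hm, fsEnergy, Measure.restrict_univ, volume_pi]

end MarginalEstimates

section BilinearEstimate

variable {n : ℕ} {F : Type*} [NormedAddCommGroup F] [NormedSpace ℝ F]

lemma lintegral_enorm_sq_mul_le_of_finset (hn : 1 ≤ n) {u : Heis n → E} {v : Heis n → F}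
    (hu : IsTestFunction u) (hv : IsTestFunction v) (B : Finset (Fin (2 * n))) :
    ∫⁻ x, ‖u x‖ₑ ^ 2 * ‖v x‖ₑ ^ 2 ≤
      5 * 2 ^ (2 * n) * (fsEnergy univ (B.card + 2) u * fsEnergy univ Bᶜ.card v) := by
  have hpow : (2 : ℝ≥0∞) ^ B.card * 2 ^ Bᶜ.card = 2 ^ (2 * n) := by
    simp [← pow_add, Finset.card_add_card_compl]
  have hu_le : (fun x => ‖u x‖ₑ ^ 2) ≤ ∫⋯∫⁻_withVertical B,
      (fun z => 5 * 2 ^ B.card * hEnergy (B.card + 2) u z) ∂fun _ => volume := fun x =>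
    (hu.enorm_sq_le_lmarginal hn B x).trans_eq (lintegral_const_mul' _ _ (by finiteness)).symm
  have hm : Measurable fun z => 5 * 2 ^ B.card * hEnergy (B.card + 2) u z :=
    (hu.measurable_hEnergy _).const_mul _
  refine (lintegral_mul_le_of_le_lmarginal hv.measurable_enorm_sq hm hu_le
    (hv.lmarginal_enorm_sq_le_fsEnergy B)).trans_eq ?_
  rw [← volume_pi, lintegral_const_mul' _ _ (by finiteness), ← hpow]
  simp only [fsEnergy, Measure.restrict_univ]
  ring

lemma lintegral_enorm_sq_mul_le (hn : 1 ≤ n) {u : Heis n → E} {v : Heis n → F}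
    (hu : IsTestFunction u) (hv : IsTestFunction v) {k l : ℕ} (hkl : 2 * n + 2 ≤ k + l) :
    ∫⁻ x, ‖u x‖ₑ ^ 2 * ‖v x‖ₑ ^ 2 ≤
      5 * 2 ^ (2 * n) * (fsEnergy univ k u * fsEnergy univ l v) := by
  have exists_card_eq {m : ℕ} (hm : m ≤ 2 * n) : ∃ B : Finset (Fin (2 * n)), B.card = m :=
    (Finset.exists_subset_card_eq (s := Finset.univ) (by simpa using hm)).imp fun _ h => h.2
  have hcard (B : Finset (Fin (2 * n))) : B.card + Bᶜ.card = 2 * n := by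
    simp [Finset.card_add_card_compl]
  rcases le_or_gt 2 k with hk | hk
  · obtain ⟨B, hB⟩ := exists_card_eq (min_le_right (k - 2) (2 * n))
    refine (lintegral_enorm_sq_mul_le_of_finset hn hu hv B).trans ?_
    have := hcard B
    gcongr <;> exact fsEnergy_mono (by omega) _ _
  · obtain ⟨B, hB⟩ := exists_card_eq (m := k) (by omega)
    have h := lintegral_enorm_sq_mul_le_of_finset hn hv hu Bᶜ
    rw [compl_compl] at h
    simp only [mul_comm (‖v _‖ₑ ^ 2), mul_comm (fsEnergy univ _ v)] at h
    have := hcard B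
    refine h.trans ?_
    gcongr <;> exact fsEnergy_mono (by omega) _ _

end BilinearEstimate

section Products

variable {n : ℕ}

lemma IsTestFunction.fsEnergy_succ_mul_le {A : Type*} [NormedRing A] [NormedAlgebra ℝ A]
    {u v : Heis n → A} (hu : IsTestFunction u) (hv : IsTestFunction v) {k : ℕ} {P Q : ℝ≥0∞}
    (hP : ∫⁻ x, ‖u x‖ₑ ^ 2 * ‖v x‖ₑ ^ 2 ≤ P)
    (hQu : ∀ j, fsEnergy univ k (hDeriv n j u * v) ≤ Q)
    (hQv : ∀ j, fsEnergy univ k (u * hDeriv n j v) ≤ Q) :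
    fsEnergy univ (k + 1) (u * v) ≤ P + 2 * n * (4 * Q) := by
  have hLeibniz (j : Fin (2 * n)) : fsEnergy univ k (_root_.hDeriv n j (u * v)) ≤ 4 * Q := by
    rw [hDeriv_mul j hu.differentiable hv.differentiable]
    calc _ ≤ 2 * (_ + _) := ((hu.hDeriv j).mul hv).fsEnergy_add_le (hu.mul (hv.hDeriv j)) univ k
      _ ≤ 2 * (Q + Q) := by gcongr; exacts [hQu j, hQv j]
      _ = 4 * Q := by ring
  rw [(hu.mul hv).fsEnergy_univ_succ]
  gcongr
  · exact (lintegral_mono fun x => enorm_mul_sq_le _ _).trans hP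
  · refine (Finset.sum_le_sum fun j _ => hLeibniz j).trans_eq ?_
    simp

section TwoFactors

variable (A : Type*) [NormedRing A] [NormedAlgebra ℝ A]

lemma exists_fsEnergy_mul_le (hn : 1 ≤ n) (k : ℕ) :
    ∃ C : ℝ≥0, ∀ u v : Heis n → A, IsTestFunction u → IsTestFunction v →
      ∀ a b, k ≤ a → k ≤ b → 2 * n + 2 + k ≤ a + b →
        fsEnergy univ k (u * v) ≤ C * (fsEnergy univ a u * fsEnergy univ b v) := by
  induction k with
  | zero =>
    refine ⟨5 * 2 ^ (2 * n), fun u v hu hv a b _ _ hab => ?_⟩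
    rw [fsEnergy_univ_zero]
    exact (lintegral_mono fun x => enorm_mul_sq_le _ _).trans
      ((lintegral_enorm_sq_mul_le hn hu hv hab).trans_eq (by push_cast; rfl))
  | succ k ih =>
    obtain ⟨C, hC⟩ := ih
    refine ⟨5 * 2 ^ (2 * n) + 2 * n * (4 * C), fun u v hu hv a b ha hb hab => ?_⟩
    obtain ⟨a, rfl⟩ := Nat.exists_eq_add_of_le' (Nat.one_le_of_lt ha)
    obtain ⟨b, rfl⟩ := Nat.exists_eq_add_of_le' (Nat.one_le_of_lt hb)
    refine (hu.fsEnergy_succ_mul_le hv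
      (lintegral_enorm_sq_mul_le hn hu hv (k := a + 1) (l := b + 1) (by omega))
      (Q := C * (fsEnergy univ (a + 1) u * fsEnergy univ (b + 1) v)) (fun j => ?_)
      fun j => ?_).trans_eq (by push_cast; ring)
    · refine (hC _ v (hu.hDeriv j) hv a (b + 1) (by omega) (by omega) (by omega)).trans ?_
      gcongr
      exact fsEnergy_hDeriv_le _ _ _ _
    · refine (hC u _ hu (hv.hDeriv j) (a + 1) b (by omega) (by omega) (by omega)).trans ?_
      gcongr
      exact fsEnergy_hDeriv_le _ _ _ _

lemma exists_fsEnergy_succ_mul_le (hn : 1 ≤ n) {r : ℕ} (hr : 2 * n + 2 ≤ r) :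
    ∃ C : ℝ≥0, ∀ u v : Heis n → A, IsTestFunction u → IsTestFunction v →
      fsEnergy univ (r + 1) (u * v) ≤
        C * (fsEnergy univ (r + 1) u * fsEnergy univ r v +
          fsEnergy univ r u * fsEnergy univ (r + 1) v) := by
  obtain ⟨C, hC⟩ := exists_fsEnergy_mul_le A hn r
  refine ⟨5 * 2 ^ (2 * n) + 2 * n * (4 * C), fun u v hu hv => ?_⟩
  set S := fsEnergy univ (r + 1) u * fsEnergy univ r v +
    fsEnergy univ r u * fsEnergy univ (r + 1) v
  have hP : ∫⁻ x, ‖u x‖ₑ ^ 2 * ‖v x‖ₑ ^ 2 ≤ 5 * 2 ^ (2 * n) * S :=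
    (lintegral_enorm_sq_mul_le hn hu hv (k := r + 1) (l := r) (by omega)).trans
      (mul_le_mul_right le_self_add _)
  refine (hu.fsEnergy_succ_mul_le hv hP (Q := C * S) (fun j => ?_) fun j => ?_).trans_eq
    (by push_cast; ring)
  · refine (hC _ v (hu.hDeriv j) hv r r le_rfl le_rfl (by omega)).trans ?_
    gcongr
    exact le_add_right (by gcongr; exact fsEnergy_hDeriv_le _ _ _ _)
  · refine (hC u _ hu (hv.hDeriv j) r r le_rfl le_rfl (by omega)).trans ?_
    gcongr
    exact le_add_left (by gcongr; exact fsEnergy_hDeriv_le _ _ _ _)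

end TwoFactors

section FiniteProducts

variable (A : Type*) [NormedCommRing A] [NormedAlgebra ℝ A] {ι : Type*} {σ : Finset ι}

lemma exists_fsEnergy_prod_le (hn : 1 ≤ n) {r : ℕ} (hr : 2 * n + 2 ≤ r) (hσ : σ.Nonempty) :
    ∃ C : ℝ≥0, ∀ F : ι → Heis n → A, (∀ i ∈ σ, IsTestFunction (F i)) →
      fsEnergy univ r (∏ i ∈ σ, F i) ≤ C * ∏ i ∈ σ, fsEnergy univ r (F i) := by
  obtain ⟨C, hC⟩ := exists_fsEnergy_mul_le A hn r
  induction hσ using Finset.Nonempty.cons_induction with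
  | singleton a => exact ⟨1, fun F _ => by simp⟩
  | cons a σ ha hσ ih =>
    obtain ⟨C', hC'⟩ := ih
    refine ⟨C * C', fun F hF => ?_⟩
    have hFσ : ∀ i ∈ σ, IsTestFunction (F i) := fun i hi => hF i (Finset.mem_cons_of_mem hi)
    simp only [Finset.prod_cons]
    calc _ ≤ C * (fsEnergy univ r (F a) * fsEnergy univ r (∏ i ∈ σ, F i)) :=
          hC _ _ (hF a (Finset.mem_cons_self a σ)) (.prod hσ hFσ) r r le_rfl le_rfl (by omega)
      _ ≤ C * (fsEnergy univ r (F a) * (C' * ∏ i ∈ σ, fsEnergy univ r (F i))) := by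
          gcongr
          exact hC' F hFσ
      _ = _ := by push_cast; ring

lemma sum_mul_prod_erase_cons [DecidableEq ι] {R : Type*} [CommSemiring R] {a : ι} (ha : a ∉ σ)
    (x y : ι → R) :
    ∑ j ∈ σ.cons a ha, x j * ∏ i ∈ (σ.cons a ha).erase j, y i =
      x a * ∏ i ∈ σ, y i + y a * ∑ j ∈ σ, x j * ∏ i ∈ σ.erase j, y i := by
  rw [Finset.sum_cons, Finset.mul_sum, Finset.cons_eq_insert, Finset.erase_insert ha]
  refine congrArg _ (Finset.sum_congr rfl fun j hj => ?_)
  rw [Finset.erase_insert_of_ne (ne_of_mem_of_not_mem hj ha).symm,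
    Finset.prod_insert (mt Finset.mem_of_mem_erase ha), mul_left_comm]

lemma exists_fsEnergy_succ_prod_le [DecidableEq ι] (hn : 1 ≤ n) {r : ℕ} (hr : 2 * n + 2 ≤ r)
    (hσ : σ.Nonempty) :
    ∃ C : ℝ≥0, ∀ F : ι → Heis n → A, (∀ i ∈ σ, IsTestFunction (F i)) →
      fsEnergy univ (r + 1) (∏ i ∈ σ, F i) ≤
        C * ∑ j ∈ σ, fsEnergy univ (r + 1) (F j) * ∏ i ∈ σ.erase j, fsEnergy univ r (F i) := by
  obtain ⟨C, hC⟩ := exists_fsEnergy_succ_mul_le A hn hr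
  induction hσ using Finset.Nonempty.cons_induction with
  | singleton a => exact ⟨1, fun F _ => by simp⟩
  | cons a σ ha hσ ih =>
    obtain ⟨C₁, hC₁⟩ := ih
    obtain ⟨C₀, hC₀⟩ := exists_fsEnergy_prod_le A hn hr hσ
    refine ⟨C * (C₀ + C₁), fun F hF => ?_⟩
    have hFσ : ∀ i ∈ σ, IsTestFunction (F i) := fun i hi => hF i (Finset.mem_cons_of_mem hi)
    rw [sum_mul_prod_erase_cons, Finset.prod_cons]
    set P := ∏ i ∈ σ, fsEnergy univ r (F i)
    set S := ∑ j ∈ σ, fsEnergy univ (r + 1) (F j) * ∏ i ∈ σ.erase j, fsEnergy univ r (F i)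
    calc _ ≤ C * (fsEnergy univ (r + 1) (F a) * fsEnergy univ r (∏ i ∈ σ, F i) +
            fsEnergy univ r (F a) * fsEnergy univ (r + 1) (∏ i ∈ σ, F i)) :=
          hC _ _ (hF a (Finset.mem_cons_self a σ)) (.prod hσ hFσ)
      _ ≤ C * (fsEnergy univ (r + 1) (F a) * ((C₀ + C₁) * P) +
            fsEnergy univ r (F a) * ((C₀ + C₁) * S)) := by
          gcongr
          · exact (hC₀ F hFσ).trans (by gcongr; exact le_self_add)
          · exact (hC₁ F hFσ).trans (by gcongr; exact le_add_self)
      _ = _ := by push_cast; ring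

end FiniteProducts

end Products

section Localization

variable {n : ℕ} {D D' : Set (Heis n)} {χ : Heis n → ℝ}

lemma IsTestFunction.exists_enorm_le {V : Type*} [NormedAddCommGroup V] [NormedSpace ℝ V]
    {u : V → E} (hu : IsTestFunction u) : ∃ C : ℝ≥0, ∀ x, ‖u x‖ₑ ≤ C := by
  obtain ⟨C, hC⟩ := hu.hasCompactSupport.exists_bound_of_continuous hu.contDiff.continuous
  refine ⟨C.toNNReal, fun x => ?_⟩
  rw [← ofReal_norm]
  exact ENNReal.ofReal_le_ofReal (hC x)

variable (E) in
lemma IsTestFunction.exists_hEnergy_smul_le (hD : IsOpen D) (hχ : IsTestFunction χ)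
    (hχD : tsupport χ ⊆ D) (k : ℕ) :
    ∃ C : ℝ≥0, ∀ f : Heis n → E, ContDiffOn ℝ ∞ f D →
      ∀ x, hEnergy k (χ • f) x ≤ C * hEnergy k f x := by
  induction k generalizing χ with
  | zero =>
    obtain ⟨M, hM⟩ := hχ.exists_enorm_le
    refine ⟨M ^ 2, fun f _ x => ?_⟩
    simp only [hEnergy_zero, Pi.smul_apply', enorm_smul, mul_pow, ENNReal.coe_pow]
    gcongr
    exact hM x
  | succ k ih =>
    obtain ⟨M, hM⟩ := hχ.exists_enorm_le
    obtain ⟨C, hC⟩ := ih hχ hχD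
    have hχjD (j : Fin (2 * n)) : tsupport (_root_.hDeriv n j χ) ⊆ D :=
      (tsupport_hDeriv_subset j).trans hχD
    choose C' hC' using fun j => ih (hχ.hDeriv j) (hχjD j)
    refine ⟨M ^ 2 + ∑ j, 2 * (C' j + C), fun f hf x => ?_⟩
    have hfj (j : Fin (2 * n)) := contDiffOn_hDeriv hD hf j
    have hj (j : Fin (2 * n)) : hEnergy k (_root_.hDeriv n j (χ • f)) x ≤
        2 * (C' j + C) * hEnergy (k + 1) f x := by
      rw [hDeriv_smul_of_tsupport_subset hD hχ hχD hf j]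
      calc _ ≤ 2 * (_ + _) := ((hχ.hDeriv j).smul_contDiffOn hD (hχjD j) hf).hEnergy_add_le
              (hχ.smul_contDiffOn hD hχD (hfj j)) k x
        _ ≤ 2 * (C' j * hEnergy (k + 1) f x + C * hEnergy (k + 1) f x) := by
            gcongr
            · exact (hC' j f hf x).trans (by gcongr; exact hEnergy_mono k.le_succ f x)
            · exact (hC _ (hfj j) x).trans (by gcongr; exact hEnergy_hDeriv_le k j f x)
        _ = _ := by ring
    calc hEnergy (k + 1) (χ • f) x
        ≤ M ^ 2 * hEnergy (k + 1) f x + ∑ j, 2 * (C' j + C) * hEnergy (k + 1) f x := by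
          rw [hEnergy_succ, Pi.smul_apply', enorm_smul, mul_pow]
          gcongr with j
          · exact hM x
          · exact enorm_sq_le_hEnergy _ f x
          · exact hj j
      _ = _ := by push_cast; rw [← Finset.sum_mul, ← add_mul]

variable (E) in
lemma IsTestFunction.exists_fsEnergy_smul_le (hD : IsOpen D) (hχ : IsTestFunction χ)
    (hχD : tsupport χ ⊆ D) (k : ℕ) :
    ∃ C : ℝ≥0, ∀ f : Heis n → E, ContDiffOn ℝ ∞ f D →
      fsEnergy univ k (χ • f) ≤ C * fsEnergy D k f := by
  obtain ⟨C, hC⟩ := hχ.exists_hEnergy_smul_le E hD hχD k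
  refine ⟨C, fun f hf => ?_⟩
  have hsupp : support (hEnergy k (χ • f)) ⊆ D := fun x hx => by
    by_contra hxD
    exact hx <| hEnergy_eq_zero_of_notMem_tsupport
      (fun h => hxD (hχD (tsupport_smul_subset_left χ f h))) k
  calc fsEnergy univ k (χ • f) = ∫⁻ x in D, hEnergy k (χ • f) x := by
        rw [fsEnergy, Measure.restrict_univ, setLIntegral_eq_of_support_subset hsupp]
    _ ≤ ∫⁻ x in D, C * hEnergy k f x := lintegral_mono (hC f hf)
    _ = C * fsEnergy D k f := lintegral_const_mul' _ _ (by simp)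

lemma exists_fsEnergy_prod_le_of_closure_subset (A : Type*) [NormedCommRing A] [NormedAlgebra ℝ A]
    (ι : Type*) [Fintype ι] [DecidableEq ι] [Nonempty ι] (hn : 1 ≤ n) {r : ℕ}
    (hr : 2 * n + 2 ≤ r) (hD : IsOpen D) (hD'b : IsBounded D') (hsub : closure D' ⊆ D) :
    ∃ C : ℝ≥0, ∀ f : ι → Heis n → A, (∀ i, ContDiffOn ℝ ∞ (f i) D) →
      fsEnergy D' (r + 1) (∏ i, f i) ≤
        C * ∑ j, fsEnergy D (r + 1) (f j) * ∏ i ∈ Finset.univ.erase j, fsEnergy D r (f i) := by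
  obtain ⟨χ, hχ, hχD, hχ_one⟩ :=
    IsTestFunction.exists_eq_one_nhdsSet hD'b.isCompact_closure hD hsub
  obtain ⟨W, hW, hD'W, hχW⟩ := mem_nhdsSet_iff_exists.1 hχ_one
  obtain ⟨C, hC⟩ := exists_fsEnergy_succ_prod_le A hn hr (Finset.univ_nonempty (α := ι))
  obtain ⟨C₁, hC₁⟩ := hχ.exists_fsEnergy_smul_le A hD hχD (r + 1)
  obtain ⟨C₀, hC₀⟩ := hχ.exists_fsEnergy_smul_le A hD hχD r
  refine ⟨C * (C₁ * C₀ ^ (Fintype.card ι - 1)), fun f hf => ?_⟩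
  have hprod : EqOn (∏ i, f i) (∏ i, χ • f i) W := fun x hx => by
    have hx_one : χ x = 1 := hχW hx
    simp [hx_one]
  calc fsEnergy D' (r + 1) (∏ i, f i)
      ≤ fsEnergy W (r + 1) (∏ i, f i) := fsEnergy_mono_set (subset_closure.trans hD'W) _ _
    _ = fsEnergy W (r + 1) (∏ i, χ • f i) :=
        setLIntegral_congr_fun hW.measurableSet (hEnergy_congr hW hprod _)
    _ ≤ fsEnergy univ (r + 1) (∏ i, χ • f i) := fsEnergy_mono_set (subset_univ W) _ _
    _ ≤ C * ∑ j, fsEnergy univ (r + 1) (χ • f j) *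
          ∏ i ∈ Finset.univ.erase j, fsEnergy univ r (χ • f i) :=
        hC _ fun i _ => hχ.smul_contDiffOn hD hχD (hf i)
    _ ≤ C * ∑ j, C₁ * fsEnergy D (r + 1) (f j) *
          ∏ i ∈ Finset.univ.erase j, C₀ * fsEnergy D r (f i) := by
        gcongr with j _ i _
        exacts [hC₁ _ (hf j), hC₀ _ (hf i)]
    _ = _ := by
        simp only [Finset.prod_mul_distrib, Finset.prod_const, Finset.mul_sum,
          Finset.card_erase_of_mem (Finset.mem_univ _), Finset.card_univ]
        push_cast
        refine Finset.sum_congr rfl fun j _ => ?_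
        ring

end Localization

section FolandSteinNorm

variable {n : ℕ} {D D' : Set (Heis n)} {f : Heis n → E}

lemma ofReal_integral_le_lintegral_ofReal {α : Type*} [MeasurableSpace α] {μ : Measure α}
    {g : α → ℝ} (hg : 0 ≤ g) : ENNReal.ofReal (∫ x, g x ∂μ) ≤ ∫⁻ x, ENNReal.ofReal (g x) ∂μ := by
  by_cases hint : Integrable g μ
  · exact (ofReal_integral_eq_lintegral_ofReal hint (ae_of_all _ hg)).le
  · simp [integral_undef hint]

lemma sqrt_sum_le_sum_sqrt {ι : Type*} (s : Finset ι) {a : ι → ℝ} (ha : ∀ i ∈ s, 0 ≤ a i) :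
    √(∑ i ∈ s, a i) ≤ ∑ i ∈ s, √(a i) := by
  refine Real.sqrt_le_iff.2 ⟨Finset.sum_nonneg fun i _ => Real.sqrt_nonneg _, ?_⟩
  calc ∑ i ∈ s, a i = ∑ i ∈ s, √(a i) ^ 2 :=
        Finset.sum_congr rfl fun i hi => (Real.sq_sqrt (ha i hi)).symm
    _ ≤ _ := Finset.sum_sq_le_sq_sum_of_nonneg fun i _ => Real.sqrt_nonneg _

lemma fsNormSq_nonneg (D : Set (Heis n)) (k : ℕ) (f : Heis n → E) : 0 ≤ fsNormSq n D k f :=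
  Finset.sum_nonneg fun _ _ => Finset.sum_nonneg fun _ _ => integral_nonneg fun _ => sq_nonneg _

lemma ofReal_fsNormSq_eq_sum (D : Set (Heis n)) (k : ℕ) (f : Heis n → E) :
    ENNReal.ofReal (fsNormSq n D k f) = ∑ t ∈ Finset.range (k + 1), ∑ I : Fin t → Fin (2 * n),
      ENNReal.ofReal (∫ x in D, ‖XI n (List.ofFn I) f x‖ ^ 2) := by
  rw [fsNormSq, ENNReal.ofReal_sum_of_nonneg fun _ _ => Finset.sum_nonneg fun _ _ =>
    integral_nonneg fun _ => sq_nonneg _]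
  exact Finset.sum_congr rfl fun _ _ => ENNReal.ofReal_sum_of_nonneg fun _ _ =>
    integral_nonneg fun _ => sq_nonneg _

lemma fsEnergy_eq_sum (hD : IsOpen D) (hD'D : D' ⊆ D) (hf : ContDiffOn ℝ ∞ f D) (k : ℕ) :
    fsEnergy D' k f = ∑ t ∈ Finset.range (k + 1), ∑ I : Fin t → Fin (2 * n),
      ∫⁻ x in D', ENNReal.ofReal (‖XI n (List.ofFn I) f x‖ ^ 2) := by
  have hmeas (I : List (Fin (2 * n))) :
      AEMeasurable (fun x => ‖XI n I f x‖ₑ ^ 2) (volume.restrict D') :=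
    (((contDiffOn_XI hD hf I).continuousOn.enorm.aemeasurable hD.measurableSet).pow_const
      2).mono_measure (Measure.restrict_mono hD'D le_rfl)
  simp only [fsEnergy, hEnergy, ENNReal.ofReal_pow (norm_nonneg _), ofReal_norm]
  rw [lintegral_finsetSum' _ fun _ _ => Finset.aemeasurable_fun_sum _ fun _ _ => hmeas _]
  exact Finset.sum_congr rfl fun _ _ => lintegral_finsetSum' _ fun _ _ => hmeas _

lemma ofReal_fsNormSq_le_fsEnergy (hD : IsOpen D) (hD'D : D' ⊆ D) (hf : ContDiffOn ℝ ∞ f D)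
    (k : ℕ) : ENNReal.ofReal (fsNormSq n D' k f) ≤ fsEnergy D' k f := by
  rw [ofReal_fsNormSq_eq_sum, fsEnergy_eq_sum hD hD'D hf]
  exact Finset.sum_le_sum fun _ _ => Finset.sum_le_sum fun _ _ =>
    ofReal_integral_le_lintegral_ofReal fun _ => sq_nonneg _

lemma FSIntegrable.mono {k l : ℕ} (hf : FSIntegrable D l f) (h : k ≤ l) : FSIntegrable D k f :=
  fun I hI => hf I (hI.trans h)

lemma FSIntegrable.fsEnergy_eq_ofReal {k : ℕ} (hfi : FSIntegrable D k f) (hD : IsOpen D)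
    (hf : ContDiffOn ℝ ∞ f D) : fsEnergy D k f = ENNReal.ofReal (fsNormSq n D k f) := by
  rw [ofReal_fsNormSq_eq_sum, fsEnergy_eq_sum hD subset_rfl hf]
  refine Finset.sum_congr rfl fun t ht => Finset.sum_congr rfl fun I _ => ?_
  have hI : (List.ofFn I).length ≤ k := by
    rw [List.length_ofFn]
    exact Nat.lt_succ_iff.1 (Finset.mem_range.1 ht)
  exact (ofReal_integral_eq_lintegral_ofReal (hfi _ hI) (ae_of_all _ fun _ => sq_nonneg _)).symm

lemma exists_fsNormSq_prod_le (A : Type*) [NormedCommRing A] [NormedAlgebra ℝ A]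
    (ι : Type*) [Fintype ι] [DecidableEq ι] [Nonempty ι] (hn : 1 ≤ n) {r : ℕ}
    (hr : 2 * n + 2 ≤ r) (hD : IsOpen D) (hD'b : IsBounded D') (hsub : closure D' ⊆ D) :
    ∃ C : ℝ≥0, ∀ f : ι → Heis n → A, (∀ i, ContDiffOn ℝ ∞ (f i) D) →
      (∀ i, FSIntegrable D (r + 1) (f i)) →
      fsNormSq n D' (r + 1) (fun x => ∏ i, f i x) ≤
        C * ∑ j, fsNormSq n D (r + 1) (f j) *
          ∏ i ∈ Finset.univ.erase j, fsNormSq n D r (f i) := by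
  obtain ⟨C, hC⟩ := exists_fsEnergy_prod_le_of_closure_subset A ι hn hr hD hD'b hsub
  refine ⟨C, fun f hf hfi => ?_⟩
  have hprod_nonneg (j : ι) : 0 ≤ ∏ i ∈ Finset.univ.erase j, fsNormSq n D r (f i) :=
    Finset.prod_nonneg fun i _ => fsNormSq_nonneg D r (f i)
  have hterm_nonneg (j : ι) : 0 ≤ fsNormSq n D (r + 1) (f j) *
      ∏ i ∈ Finset.univ.erase j, fsNormSq n D r (f i) :=
    mul_nonneg (fsNormSq_nonneg _ _ _) (hprod_nonneg j)
  rw [← ENNReal.ofReal_le_ofReal_iff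
    (mul_nonneg C.coe_nonneg (Finset.sum_nonneg fun j _ => hterm_nonneg j))]
  calc ENNReal.ofReal (fsNormSq n D' (r + 1) fun x => ∏ i, f i x)
      ≤ fsEnergy D' (r + 1) fun x => ∏ i, f i x :=
        ofReal_fsNormSq_le_fsEnergy hD (subset_closure.trans hsub)
          (contDiffOn_prod fun i _ => hf i) _
    _ ≤ C * ∑ j, fsEnergy D (r + 1) (f j) *
          ∏ i ∈ Finset.univ.erase j, fsEnergy D r (f i) := by
        simpa only [Finset.prod_fn] using hC f hf
    _ = _ := by
        rw [ENNReal.ofReal_mul C.coe_nonneg, ENNReal.ofReal_coe_nnreal,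
          ENNReal.ofReal_sum_of_nonneg fun j _ => hterm_nonneg j]
        simp only [ENNReal.ofReal_mul (fsNormSq_nonneg _ _ _),
          ENNReal.ofReal_prod_of_nonneg fun i _ => fsNormSq_nonneg D r (f i),
          fun i => (hfi i).fsEnergy_eq_ofReal hD (hf i),
          fun i => ((hfi i).mono r.le_succ).fsEnergy_eq_ofReal hD (hf i)]

end FolandSteinNorm

section SmoothUpToBoundary

variable {n : ℕ} {D : Set (Heis n)} {f : Heis n → E}

/-- Near every point of `closure D`, `f` agrees on `D` with functions of every finite class `C^k`
on `closure D`. Unlike smoothness on `closure D` itself, this is inherited by horizontal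
derivatives, whose values on the boundary of `D` are junk. -/
def HasSmoothExtension {V : Type*} [NormedAddCommGroup V] [NormedSpace ℝ V] (D : Set V)
    (f : V → E) : Prop :=
  ∀ x ∈ closure D, ∀ k : ℕ, ∃ g, ContDiffWithinAt ℝ k g (closure D) x ∧ f =ᶠ[𝓝[D] x] g

lemma HasSmoothExtension.of_contDiffOn_closure {V : Type*} [NormedAddCommGroup V]
    [NormedSpace ℝ V] {D : Set V} {f : V → E} (hf : ContDiffOn ℝ ∞ f (closure D)) :
    HasSmoothExtension D f :=
  fun x hx k => ⟨f, (hf x hx).of_le (by exact_mod_cast le_top), .rfl⟩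

protected lemma HasSmoothExtension.hDeriv (hD : IsOpen D) (hf : HasSmoothExtension D f)
    (j : Fin (2 * n)) : HasSmoothExtension D (hDeriv n j f) := by
  intro x hx k
  obtain ⟨g, hg, hfg⟩ := hf x hx (k + 1)
  obtain ⟨u, hu, -, g', hg', hg'_diff⟩ :=
    (contDiffWithinAt_succ_iff_hasFDerivWithinAt (n := k) (by simp)).1 (mod_cast hg)
  rw [insert_eq_of_mem hx] at hu
  refine ⟨fun y => g' y (Xvec n j y), (hg'_diff.mono_of_mem_nhdsWithin hu).clm_apply
    ((contDiff_Xvec j).of_le (by exact_mod_cast le_top)).contDiffWithinAt, ?_⟩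
  have hfg_nhds : ∀ᶠ y in 𝓝[D] x, f =ᶠ[𝓝[D] y] g := eventually_eventually_nhdsWithin.2 hfg
  have hu_nhds : ∀ᶠ y in 𝓝[D] x, u ∈ 𝓝[closure D] y :=
    nhdsWithin_mono x subset_closure (eventually_mem_nhdsWithin_iff.2 hu)
  filter_upwards [hfg_nhds, hu_nhds, self_mem_nhdsWithin] with y hfgy huy hy
  rw [hD.nhdsWithin_eq hy] at hfgy
  have hu_mem : u ∈ 𝓝 y := by
    rwa [nhdsWithin_eq_nhds.2 (mem_of_superset (hD.mem_nhds hy) subset_closure)] at huy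
  rw [_root_.hDeriv, hfgy.fderiv_eq, ((hg' y (mem_of_mem_nhds hu_mem)).hasFDerivAt hu_mem).fderiv]

protected lemma HasSmoothExtension.XI (hD : IsOpen D) (hf : HasSmoothExtension D f)
    (I : List (Fin (2 * n))) : HasSmoothExtension D (XI n I f) := by
  induction I with
  | nil => exact hf
  | cons j I ih => exact ih.hDeriv hD j

lemma isBounded_image_of_tendsto_nhdsWithin {X Y : Type*} [PseudoMetricSpace X] [ProperSpace X]
    [MetricSpace Y] {D : Set X} (hD : IsBounded D) {f : X → Y}
    (hf : ∀ x ∈ closure D, ∃ y, Tendsto f (𝓝[D] x) (𝓝 y)) : IsBounded (f '' D) := by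
  have hext : EqOn f (extendFrom D f) D := fun x hx => by
    obtain ⟨y, hy⟩ := hf x (subset_closure hx)
    rw [extendFrom_eq (subset_closure hx) hy]
    exact tendsto_nhds_unique (tendsto_pure_nhds f x) (hy.mono_left (pure_le_nhdsWithin hx))
  have hcompact : IsCompact (extendFrom D f '' closure D) :=
    hD.isCompact_closure.image_of_continuousOn (continuousOn_extendFrom subset_rfl hf)
  rw [hext.image_eq]
  exact hcompact.isBounded.subset (image_mono subset_closure)

lemma HasSmoothExtension.isBounded_image (hD : IsBounded D) (hf : HasSmoothExtension D f) :
    IsBounded (f '' D) :=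
  isBounded_image_of_tendsto_nhdsWithin hD fun x hx =>
    have ⟨g, hg, hfg⟩ := hf x hx 0
    ⟨g x, (hg.continuousWithinAt.mono subset_closure).congr' hfg.symm⟩

lemma fsIntegrable_of_contDiffOn_closure (hD : IsOpen D) (hDb : IsBounded D)
    (hf : ContDiffOn ℝ ∞ f (closure D)) (k : ℕ) : FSIntegrable D k f := by
  intro I _
  have hXI := HasSmoothExtension.of_contDiffOn_closure hf |>.XI hD I
  obtain ⟨M, hM⟩ := isBounded_iff_forall_norm_le.1 (hXI.isBounded_image hDb)
  have hcont : ContinuousOn (fun x => ‖XI n I f x‖ ^ 2) D :=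
    (contDiffOn_XI hD (hf.mono subset_closure) I).continuousOn.norm.pow 2
  refine .of_bound hDb.measure_lt_top (hcont.aestronglyMeasurable hD.measurableSet) (M ^ 2)
    ((ae_restrict_mem hD.measurableSet).mono fun x hx => ?_)
  rw [norm_pow, norm_norm]
  gcongr
  exact hM _ (mem_image_of_mem _ hx)

end SmoothUpToBoundary

theorem statement7_general {A : Type*} [NormedCommRing A] [NormedAlgebra ℝ A]
    {ι : Type*} [Fintype ι] [DecidableEq ι] [Nonempty ι] {n s : ℕ} {D D' : Set (Heis n)}
    (hn : 1 ≤ n) (hs : 2 * n + 3 ≤ s) (hD : IsOpen D) (hD'b : IsBounded D')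
    (hsub : closure D' ⊆ D) :
    ∃ C > (0 : ℝ), ∀ f : ι → Heis n → A, (∀ i, ContDiffOn ℝ ∞ (f i) D) →
      (∀ i, FSIntegrable D s (f i)) →
      fsNorm n D' s (fun x => ∏ i, f i x) ≤
        C * ∑ j, fsNorm n D s (f j) *
          ∏ i ∈ Finset.univ.erase j, fsNorm n D (s - 1) (f i) := by
  obtain ⟨r, rfl⟩ := Nat.exists_eq_add_of_le' (Nat.one_le_of_lt hs)
  obtain ⟨C, hC⟩ := exists_fsNormSq_prod_le A ι hn (Nat.le_of_succ_le_succ hs) hD hD'b hsub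
  refine ⟨√C + 1, by positivity, fun f hf hfi => ?_⟩
  have hprod_nonneg (j : ι) : 0 ≤ ∏ i ∈ Finset.univ.erase j, fsNormSq n D r (f i) :=
    Finset.prod_nonneg fun i _ => fsNormSq_nonneg D r (f i)
  calc fsNorm n D' (r + 1) (fun x => ∏ i, f i x)
      ≤ √(C * ∑ j, fsNormSq n D (r + 1) (f j) *
          ∏ i ∈ Finset.univ.erase j, fsNormSq n D r (f i)) := Real.sqrt_le_sqrt (hC f hf hfi)
    _ ≤ √C * ∑ j, √(fsNormSq n D (r + 1) (f j) *
          ∏ i ∈ Finset.univ.erase j, fsNormSq n D r (f i)) := by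
        rw [Real.sqrt_mul C.coe_nonneg]
        gcongr
        exact sqrt_sum_le_sum_sqrt _ fun j _ => mul_nonneg (fsNormSq_nonneg _ _ _) (hprod_nonneg j)
    _ = √C * ∑ j, fsNorm n D (r + 1) (f j) * ∏ i ∈ Finset.univ.erase j, fsNorm n D r (f i) := by
        simp only [fsNorm, Real.sqrt_mul (fsNormSq_nonneg _ _ _),
          Real.sqrt_prod _ fun i _ => fsNormSq_nonneg D r (f i)]
    _ ≤ (√C + 1) * ∑ j, fsNorm n D (r + 1) (f j) *
          ∏ i ∈ Finset.univ.erase j, fsNorm n D r (f i) := by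
        gcongr
        · exact Finset.sum_nonneg fun j _ => mul_nonneg (Real.sqrt_nonneg _)
            (Finset.prod_nonneg fun i _ => Real.sqrt_nonneg _)
        · exact le_add_of_nonneg_right zero_le_one

/-- for `s > 2n+4`,
`‖f₁⋯f_p‖_{D′,s} ≤ C Σ_j ‖f_j‖_{D,s} Π_{i≠j} ‖f_i‖_{D,s−1}`. -/
theorem statement7 (n s p : ℕ) (hn : 1 ≤ n) (hs : 2*n+4 < s) (hp : 1 ≤ p)
    (D D' : Set (Fin (2*n+1) → ℝ)) (hD : IsOpen D) (hDb : IsBounded D)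
    (hD' : IsOpen D') (hD'b : IsBounded D') (hsub : closure D' ⊆ D) :
    ∃ C > (0:ℝ), ∀ f : Fin p → ((Fin (2*n+1) → ℝ) → ℝ),
      (∀ i, ContDiffOn ℝ (⊤:ℕ∞) (f i) (closure D)) →
      fsNorm n D' s (fun x => ∏ i, f i x) ≤
        C * ∑ j : Fin p, fsNorm n D s (f j) *
              ∏ i ∈ Finset.univ.erase j, fsNorm n D (s-1) (f i) := by
  have : Nonempty (Fin p) := ⟨⟨0, hp⟩⟩
  obtain ⟨C, hC, h⟩ :=
    statement7_general (A := ℝ) (ι := Fin p) (s := s) hn (by omega) hD hD'b hsub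
  exact ⟨C, hC, fun f hf => h f (fun i => (hf i).mono subset_closure)
    fun i => fsIntegrable_of_contDiffOn_closure hD hDb (hf i) s⟩

end
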